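/- For all integers i and j, \overline{t^i u\,d(t^j u)} = ∑_{k=0}^{n} (j + k/2)·a_k·δ_{i+j,−k}·ω_0 in Ω¹_R/dR. -/

import Mathlib

open Polynomial LaurentPolynomial

noncomputable section

variable (n : ℕ) (a : ℕ → ℂ)

/-- The polynomial `p(t) = aₙtⁿ + ... + a₁t + a₀`. -/
def pPoly : Polynomial ℂ := ∑ i ∈ Finset.range (n + 1), Polynomial.C (a i) * Polynomial.X ^ i

/-- The hyperelliptic ring `R = ℂ[t,t⁻¹][u]/(u² - p(t))`. -/
abbrev HyperRing : Type :=
  AdjoinRoot ((Polynomial.X : Polynomial (LaurentPolynomial ℂ)) ^ 2 -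
    Polynomial.C ((pPoly n a).toLaurent))

/-- The element `tⁱ` of `R`, for `i : ℤ`. -/
abbrev tpow (i : ℤ) : HyperRing n a :=
  algebraMap (LaurentPolynomial ℂ) (HyperRing n a) (LaurentPolynomial.T i)

/-- The element `u` of `R`. -/
abbrev uElt : HyperRing n a := AdjoinRoot.root _

/-- The subspace `dR` of exact differentials inside the Kähler differentials `Ω¹_R`. -/
abbrev dR : Submodule ℂ (Ω[HyperRing n a⁄ℂ]) :=
  LinearMap.range (KaehlerDifferential.D ℂ (HyperRing n a)).toLinearMap

/-- The quotient `Ω¹_R/dR`. -/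
abbrev OmegaQ := Ω[HyperRing n a⁄ℂ] ⧸ dR n a

/-- The class of a Kähler differential in `Ω¹_R/dR`. -/
abbrev cl (ω : Ω[HyperRing n a⁄ℂ]) : OmegaQ n a := Submodule.Quotient.mk ω

/-- The class `\overline{f dg}` in `Ω¹_R/dR`. -/
abbrev fdg (f g : HyperRing n a) : OmegaQ n a :=
  cl n a (f • KaehlerDifferential.D ℂ (HyperRing n a) g)

/-- `ω₀ = class of t⁻¹ dt`. -/
abbrev ω0 : OmegaQ n a := fdg n a (tpow n a (-1)) (tpow n a 1)

/-- `ω_k = class of t⁻ᵏ u dt`. -/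
abbrev ωk (k : ℕ) : OmegaQ n a := fdg n a (tpow n a (-(k : ℤ)) * uElt n a) (tpow n a 1)

theorem aux_D {A M : Type*} [CommRing A] [Algebra ℂ A] [AddCommGroup M] [Module A M] [Module ℂ M]
    [IsScalarTower ℂ A M] (D : Derivation ℂ A M) (T : ℤ → A) (h0 : T 0 = 1)
    (hadd : ∀ m k, T (m + k) = T m * T k) (m : ℤ) :
    D (T m) = (m : ℂ) • T m • T (-1) • D (T 1) := by
  have e1 : T 1 • T (-1) • D (T 1) = D (T 1) := by
    rw [smul_smul, ← hadd]; simp [h0]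
  have step : ∀ m : ℤ, D (T (m + 1)) = T m • D (T 1) + T 1 • D (T m) := by
    intro m; rw [hadd, D.leibniz]
  induction m using Int.induction_on with
  | zero => simp [h0]
  | succ k ih =>
    rw [step, ih, hadd, smul_comm (T 1) (((k : ℤ) : ℂ)), mul_comm, mul_smul, smul_comm (T 1) (T k), e1]
    push_cast
    rw [add_smul, one_smul, add_comm]
  | pred k ih =>
    have h := step (-(k : ℤ) - 1)
    rw [sub_add_cancel, ih] at h
    have h2 : T 1 • D (T (-(k : ℤ) - 1)) =
        T 1 • ((((-(k : ℤ) - 1 : ℤ) : ℂ)) • T (-(k : ℤ) - 1) • T (-1) • D (T 1)) := by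
      rw [smul_comm (T 1) ((((-(k : ℤ) - 1 : ℤ) : ℂ))), smul_comm (T 1) (T (-(k : ℤ) - 1)), e1]
      have e2 : T (-(k : ℤ)) • T (-1) • D (T 1) = T (-(k : ℤ) - 1) • D (T 1) := by
        rw [smul_smul, ← hadd]; rfl
      rw [e2] at h
      rw [Int.cast_sub, sub_smul, Int.cast_one, one_smul]
      rw [h, add_sub_cancel_left]
    have h3 := congrArg (fun x => T (-1) • x) h2
    simp only [smul_smul (T (-1)) (T 1), ← hadd] at h3
    simpa [h0] using h3

theorem aux_main {A M : Type*} [CommRing A] [Algebra ℂ A] [AddCommGroup M] [Module A M] [Module ℂ M]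
    [IsScalarTower ℂ A M] (D : Derivation ℂ A M) (T : ℤ → A) (h0 : T 0 = 1)
    (hadd : ∀ m k, T (m + k) = T m * T k) (u : A) (n : ℕ) (a : ℕ → ℂ)
    (hu : u ^ 2 = ∑ k ∈ Finset.range (n + 1), a k • T k) (i j : ℤ) :
    (T i * u) • D (T j * u) = ∑ k ∈ Finset.range (n + 1),
      (((j : ℂ) + (k : ℂ) / 2) * a k) • T (i + j + k) • T (-1) • D (T 1) := by
  have hud : u • D u = (1 / 2 : ℂ) • D (u ^ 2) := by
    rw [pow_two, D.leibniz, ← two_smul ℂ (u • D u), smul_smul]; norm_num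
  have e : (T i * u) • D (T j * u) = u ^ 2 • T i • D (T j) + T (i + j) • u • D u := by
    rw [D.leibniz, smul_add, hadd]
    simp only [smul_smul]
    rw [add_comm]
    congr 2 <;> ring
  rw [e, hud, hu, aux_D D T h0 hadd j, map_sum, Finset.sum_smul, Finset.smul_sum, Finset.smul_sum,
    ← Finset.sum_add_distrib]
  refine Finset.sum_congr rfl fun k _ => ?_
  rw [D.map_smul, aux_D D T h0 hadd k]
  generalize T (-1) • D (T 1) = w
  have e3 : T (i + j + k) = T i * T j * T k := by rw [hadd, hadd]
  rw [e3, hadd]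
  simp only [← algebraMap_smul A (_ : ℂ) (_ : M), Algebra.smul_def, smul_smul, ← add_smul]
  congr 1
  simp only [map_mul, map_add, div_eq_mul_inv]
  push_cast
  ring

theorem aux_u2 (n : ℕ) (a : ℕ → ℂ) :
    uElt n a ^ 2 = ∑ k ∈ Finset.range (n + 1), a k • tpow n a k := by
  have h := AdjoinRoot.eval₂_root ((Polynomial.X : Polynomial (LaurentPolynomial ℂ)) ^ 2 -
    Polynomial.C ((pPoly n a).toLaurent))
  simp only [Polynomial.eval₂_sub, Polynomial.eval₂_pow, Polynomial.eval₂_X, Polynomial.eval₂_C,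
    sub_eq_zero] at h
  have hp : (pPoly n a).toLaurent =
      ∑ k ∈ Finset.range (n + 1), a k • (LaurentPolynomial.T (k : ℤ) : LaurentPolynomial ℂ) := by
    rw [pPoly, map_sum]
    refine Finset.sum_congr rfl fun k _ => ?_
    rw [Polynomial.toLaurent_C_mul_X_pow, ← LaurentPolynomial.smul_eq_C_mul]
  have h2 := congrArg (IsScalarTower.toAlgHom ℂ (LaurentPolynomial ℂ) (HyperRing n a)) hp
  simp only [map_sum, map_smul] at h2
  exact h.trans h2

theorem aux_cl (n : ℕ) (a : ℕ → ℂ) (m : ℤ) :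
    cl n a (tpow n a m • tpow n a (-1) • KaehlerDifferential.D ℂ (HyperRing n a) (tpow n a 1)) =
      (if m = 0 then (1 : ℂ) else 0) • ω0 n a := by
  have h0 : tpow n a 0 = 1 := by simp [tpow]
  have hadd : ∀ m k, tpow n a (m + k) = tpow n a m * tpow n a k := by
    intro m k; simp only [tpow, LaurentPolynomial.T_add, map_mul]
  split_ifs with hm
  · subst hm
    rw [h0, one_smul, one_smul]
  · rw [zero_smul]
    have h := aux_D (KaehlerDifferential.D ℂ (HyperRing n a)) (tpow n a) h0 hadd m
    refine (Submodule.Quotient.mk_eq_zero _).2 ?_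
    refine ⟨(m : ℂ)⁻¹ • tpow n a m, ?_⟩
    have hm' : (m : ℂ) ≠ 0 := by exact_mod_cast hm
    refine (Derivation.map_smul _ _ _).trans ?_
    rw [h, smul_smul, inv_mul_cancel₀ hm', one_smul]

/-- For all integers `i, j`,
`\overline{tⁱu d(tʲu)} = ∑_{k=0}^{n} (j + k/2)·a_k·δ_{i+j,−k}·ω₀` in `Ω¹_R/dR`. -/
theorem statement5 (hn : 1 ≤ n) (han : a n = 1) (ha0 : a 0 ≠ 0)
    (hsep : (pPoly n a).Separable) (i j : ℤ) :
    fdg n a (tpow n a i * uElt n a) (tpow n a j * uElt n a) =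
      (∑ k ∈ Finset.range (n + 1),
        ((j : ℂ) + (k : ℂ) / 2) * a k * (if i + j = -(k : ℤ) then 1 else 0)) • ω0 n a := by
  have h0 : tpow n a 0 = 1 := by simp [tpow]
  have hadd : ∀ m k, tpow n a (m + k) = tpow n a m * tpow n a k := by
    intro m k; simp only [tpow, LaurentPolynomial.T_add, map_mul]
  have h := aux_main (KaehlerDifferential.D ℂ (HyperRing n a)) (tpow n a) h0 hadd (uElt n a) n a
    (aux_u2 n a) i j
  have h' := congrArg (dR n a).mkQ h
  refine h'.trans ?_
  rw [map_sum, Finset.sum_smul]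
  refine Finset.sum_congr rfl fun k _ => ?_
  rw [map_smul, mul_smul _ (ite _ _ _)]
  congr 1
  refine (aux_cl n a _).trans ?_
  simp only [eq_neg_iff_add_eq_zero]
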